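/- Instability criterion: for a periodic linear discrete Lagrangian system, if the Hessian H is invertible and σ · (−1)^{m + ind(H)} < 0, where σ = sign(∏_{i=1}^n det B_i), then the monodromy matrix P has a real eigenvalue ρ > 1. -/

import Mathlib

open Matrix BigOperators

/-- The transfer matrix `T_i` of a periodic linear discrete Lagrangian system. -/
noncomputable def transferMatrix (m : ℕ) (A B : ℤ → Matrix (Fin m) (Fin m) ℝ) (i : ℤ) :
    Matrix (Fin m ⊕ Fin m) (Fin m ⊕ Fin m) ℝ :=
  Matrix.fromBlocks 0 1 (-(((B i)ᵀ)⁻¹ * B (i - 1))) (((B i)ᵀ)⁻¹ * A i)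

/-- The monodromy matrix `P = T_n ⋯ T_1`. -/
noncomputable def monodromy (m n : ℕ) (A B : ℤ → Matrix (Fin m) (Fin m) ℝ) :
    Matrix (Fin m ⊕ Fin m) (Fin m ⊕ Fin m) ℝ :=
  (List.range n).foldl (fun M i => transferMatrix m A B ((i : ℤ) + 1) * M) 1

/-- The Hessian of the action (cyclic conventions). -/
noncomputable def hessian (m n : ℕ) [NeZero n] (A B : ℤ → Matrix (Fin m) (Fin m) ℝ) :
    Matrix (Fin n × Fin m) (Fin n × Fin m) ℝ :=
  fun p q =>
    (if q.1 = p.1 then A ((p.1 : ℕ) : ℤ) p.2 q.2 else 0)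
    + (if q.1 = p.1 - 1 then -(B (((p.1 : ℕ) : ℤ) - 1) p.2 q.2) else 0)
    + (if q.1 = p.1 + 1 then -(B ((p.1 : ℕ) : ℤ) q.2 p.2) else 0)

/-- The (Morse) index of a real symmetric matrix: the number of its negative
eigenvalues counted with multiplicity, equivalently the maximal dimension of a
subspace on which the associated quadratic form is negative definite. -/
noncomputable def matIndex {N : Type*} [Fintype N] (Q : Matrix N N ℝ) : ℕ :=
  sSup {d : ℕ | ∃ W : Submodule ℝ (N → ℝ), Module.finrank ℝ W = d ∧
    ∀ x ∈ W, x ≠ 0 → x ⬝ᵥ Q *ᵥ x < 0}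

/-!
Written for the families `(u_i, u_{i+1})`, the variational system says that the cyclic operator
`1 - T S` kills them, where `S` is the cyclic shift and `T` is block diagonal with blocks `T_i`.
Solving the first-order recursion gives `det (1 - T S) = det (1 - P)`, while eliminating half of
the unknowns by a Schur complement recovers the Hessian. Comparing the two determinants yields
`det H = (-1)^m ∏ det B_i · det (P - 1)`. Since `(-1)^(ind H)` is the sign of `det H`, the
hypothesis says that `det (P - ρ)` is negative at `ρ = 1`; it is positive for large `ρ`, so it
vanishes somewhere in between.
-/

theorem exists_isRoot_gt_of_eval_neg {p : Polynomial ℝ} (hp : 0 < p.leadingCoeff) {a : ℝ}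
    (ha : p.eval a < 0) : ∃ x, a < x ∧ p.IsRoot x := by
  have hdeg : 0 < p.degree := by
    by_contra! hdeg
    rw [Polynomial.eq_C_of_degree_le_zero hdeg, Polynomial.leadingCoeff_C] at hp
    rw [Polynomial.eq_C_of_degree_le_zero hdeg, Polynomial.eval_C] at ha
    exact ha.not_gt hp
  have hlim := p.tendsto_atTop_of_leadingCoeff_nonneg hdeg hp.le
  obtain ⟨b, hb, hab⟩ :=
    ((hlim.eventually_gt_atTop 0).and (Filter.eventually_gt_atTop a)).exists
  obtain ⟨x, hx, hroot⟩ := intermediate_value_Ioo hab.le p.continuousOn ⟨ha, hb⟩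
  exact ⟨x, hx.1, hroot⟩

theorem exists_det_sub_smul_one_eq_zero_of_det_sub_smul_one_neg {N : Type*} [Fintype N]
    [DecidableEq N] (hN : Even (Fintype.card N)) {P : Matrix N N ℝ} {a : ℝ}
    (ha : (P - a • 1).det < 0) : ∃ ρ : ℝ, a < ρ ∧ (P - ρ • 1).det = 0 := by
  have hcharpoly (ρ : ℝ) : P.charpoly.eval ρ = (P - ρ • 1).det := by
    rw [eval_charpoly, ← neg_sub, det_neg, hN.neg_one_pow, one_mul, smul_one_eq_diagonal]
    rfl
  have hlead : 0 < P.charpoly.leadingCoeff := by simp [P.charpoly_monic.leadingCoeff]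
  obtain ⟨ρ, haρ, hρ⟩ := exists_isRoot_gt_of_eval_neg hlead ((hcharpoly a).trans_lt ha)
  exact ⟨ρ, haρ, (hcharpoly ρ).symm.trans hρ⟩

theorem sign_mul_neg_iff {r c : ℝ} : Real.sign r * c < 0 ↔ r * c < 0 := by
  rcases lt_trichotomy r 0 with hr | rfl | hr
  · simp [Real.sign_of_neg hr, mul_neg_iff, hr, hr.not_gt]
  · simp
  · simp [Real.sign_of_pos hr, mul_neg_iff, hr, hr.not_gt]

section Index

variable {N : Type*} [Fintype N] [DecidableEq N] {Q : Matrix N N ℝ}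

theorem toQuadraticForm'_apply {R : Type*} [CommRing R] (Q : Matrix N N R) (x : N → R) :
    Q.toQuadraticForm' x = x ⬝ᵥ Q *ᵥ x := by
  simp [Matrix.toQuadraticForm', Matrix.toLinearMap₂'_apply']

theorem matIndex_eq_sigNeg (Q : Matrix N N ℝ) : matIndex Q = sigNeg Q.toQuadraticForm' := by
  rw [matIndex, ← (sigNeg_isGreatest Q.toQuadraticForm').csSup_eq]
  congr! 5 with d W
  simp [← toQuadraticForm'_apply, QuadraticMap.PosDef, Subtype.forall]

theorem toQuadraticForm'_equivalent_weightedSumSquares (hQ : Q.IsHermitian) :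
    Q.toQuadraticForm'.Equivalent (QuadraticMap.weightedSumSquares ℝ hQ.eigenvalues) := by
  let U : Matrix N N ℝ := (hQ.eigenvectorUnitary : Matrix N N ℝ)
  have hUU : U * Uᵀ = 1 := Unitary.coe_mul_star_self hQ.eigenvectorUnitary
  have hUU' : Uᵀ * U = 1 := Unitary.coe_star_mul_self hQ.eigenvectorUnitary
  have hspec : Q = U * diagonal hQ.eigenvalues * Uᵀ := hQ.spectral_theorem
  refine ⟨⟨Matrix.toLin'OfInv hUU hUU', fun x => ?_⟩⟩
  change QuadraticMap.weightedSumSquares ℝ hQ.eigenvalues (Uᵀ *ᵥ x) = _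
  calc QuadraticMap.weightedSumSquares ℝ hQ.eigenvalues (Uᵀ *ᵥ x)
      = (Uᵀ *ᵥ x) ⬝ᵥ diagonal hQ.eigenvalues *ᵥ (Uᵀ *ᵥ x) := by
        simp only [QuadraticMap.weightedSumSquares_apply, dotProduct, mulVec_diagonal, smul_eq_mul,
          mul_left_comm]
    _ = x ⬝ᵥ Q *ᵥ x := by
        conv_rhs => rw [hspec]
        rw [← mulVec_mulVec, ← mulVec_mulVec, dotProduct_mulVec x U, ← mulVec_transpose]
    _ = Q.toQuadraticForm' x := (toQuadraticForm'_apply Q x).symm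

theorem matIndex_eq_ncard_eigenvalues_neg (hQ : Q.IsHermitian) :
    matIndex Q = {i | hQ.eigenvalues i < 0}.ncard := by
  rw [matIndex_eq_sigNeg]
  exact QuadraticForm.sigNeg_of_equiv_weightedSumSquares
    (toQuadraticForm'_equivalent_weightedSumSquares hQ)

theorem neg_one_pow_matIndex_mul_det_pos (hQ : Q.IsHermitian) (hdet : Q.det ≠ 0) :
    0 < (-1) ^ matIndex Q * Q.det := by
  have hpow : (-1 : ℝ) ^ matIndex Q = ∏ i, if hQ.eigenvalues i < 0 then (-1 : ℝ) else 1 := by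
    rw [matIndex_eq_ncard_eigenvalues_neg hQ, Finset.prod_ite]
    simp [Set.ncard_eq_toFinset_card']
  have hprod : Q.det = ∏ i, hQ.eigenvalues i := hQ.det_eq_prod_eigenvalues
  rw [hprod, Finset.prod_ne_zero_iff] at hdet
  rw [hpow, hprod, ← Finset.prod_mul_distrib]
  refine Finset.prod_pos fun i hi => ?_
  split_ifs with hneg
  · linarith
  · simpa using (not_lt.1 hneg).lt_of_ne' (hdet i hi)

end Index

section BlockColumn

variable {R ι κ μ o : Type*} [Semiring R] [Fintype ι] [DecidableEq o]

/-- The block column whose `i`-th block is `X i`. Its rows are indexed by `ι × o`, the convention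
of `Matrix.blockDiagonal`. -/
def blockColumn (X : o → Matrix ι κ R) : Matrix (ι × o) κ R :=
  of fun p => X p.2 p.1

theorem blockDiagonal_mul_blockColumn [Fintype o] (T : o → Matrix μ ι R)
    (X : o → Matrix ι κ R) :
    blockDiagonal T * blockColumn X = blockColumn fun i => T i * X i := by
  ext ⟨a, i⟩ c
  simp [mul_apply, blockColumn, blockDiagonal_apply, Fintype.sum_prod_type, ite_mul]

theorem transpose_blockColumn_single_mul_blockColumn [Fintype o] [DecidableEq ι] (i : o)
    (X : o → Matrix ι κ R) :
    (blockColumn (Pi.single i 1 : o → Matrix ι ι R))ᵀ * blockColumn X = X i := by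
  ext a c
  rw [mul_apply, Fintype.sum_prod_type_right, Finset.sum_eq_single i]
  · simp [blockColumn, one_apply]
  · intro j _ hj
    simp [blockColumn, hj]
  · simp

theorem blockColumn_single_mul_mul_transpose [DecidableEq ι] (i : o) (M : Matrix ι ι R) :
    blockColumn (Pi.single i 1 : o → Matrix ι ι R) * M *
        (blockColumn (Pi.single i 1 : o → Matrix ι ι R))ᵀ =
      blockDiagonal (Pi.single i M) := by
  ext ⟨a, j⟩ ⟨b, k⟩
  by_cases hj : j = i
  · by_cases hk : k = i
    · simp [mul_apply, blockColumn, one_apply, hj, hk]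
    · simp [mul_apply, blockColumn, blockDiagonal_apply, hj, hk, Ne.symm hk]
  · simp [mul_apply, blockColumn, blockDiagonal_apply, hj]

end BlockColumn

section CyclicShift

/-- The cyclic shift `(x_i) ↦ (x_{i-1})` on families of block vectors indexed by `Fin n`. Block
vectors are indexed by `ι × Fin n`, the convention of `Matrix.blockDiagonal`. -/
def cyclicShift (R ι : Type*) [Zero R] [One R] [DecidableEq ι] (n : ℕ) [NeZero n] :
    Matrix (ι × Fin n) (ι × Fin n) R :=
  Equiv.Perm.permMatrix R (Equiv.prodCongrRight fun _ : ι => Equiv.subRight (1 : Fin n))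

variable {R ι κ : Type*} [CommRing R] [DecidableEq ι] {n : ℕ} [NeZero n]

theorem cyclicShift_apply (p q : ι × Fin n) :
    cyclicShift R ι n p q = if (p.1, p.2 - 1) = q then 1 else 0 := by
  simp [cyclicShift, PEquiv.toMatrix_apply, Equiv.prodCongrRight, eq_comm]

variable [Fintype ι]

theorem cyclicShift_mul (M : Matrix (ι × Fin n) κ R) :
    cyclicShift R ι n * M = M.submatrix (fun p => (p.1, p.2 - 1)) id :=
  PEquiv.toMatrix_toPEquiv_mul _ M

theorem mul_cyclicShift_apply (M : Matrix κ (ι × Fin n) R) (a : κ) (q : ι × Fin n) :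
    (M * cyclicShift R ι n) a q = M a (q.1, q.2 + 1) := by
  simp [cyclicShift, PEquiv.mul_toMatrix_toPEquiv, Equiv.prodCongrRight]

theorem transpose_cyclicShift_mul_cyclicShift :
    (cyclicShift R ι n)ᵀ * cyclicShift R ι n = 1 := by
  ext p q
  rw [mul_cyclicShift_apply, transpose_apply, cyclicShift_apply]
  simp [one_apply, eq_comm]

theorem mul_transpose_cyclicShift_apply (M : Matrix κ (ι × Fin n) R) (a : κ) (q : ι × Fin n) :
    (M * (cyclicShift R ι n)ᵀ) a q = M a (q.1, q.2 - 1) := by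
  rw [← transpose_transpose M, ← transpose_mul, cyclicShift_mul]
  rfl

theorem det_cyclicShift :
    (cyclicShift R ι n).det = (-1) ^ ((n - 1) * Fintype.card ι) := by
  have hsign : Equiv.Perm.sign (Equiv.subRight (1 : Fin n)) = (-1) ^ (n - 1) := by
    obtain ⟨k, rfl⟩ := Nat.exists_eq_succ_of_ne_zero (NeZero.ne n)
    have hrot : Equiv.subRight (1 : Fin (k + 1)) = (finRotate (k + 1))⁻¹ := by
      rw [eq_inv_iff_mul_eq_one]
      ext i
      simp
    rw [hrot, Equiv.Perm.sign_inv, sign_finRotate]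
  rw [cyclicShift, det_permutation, Equiv.Perm.sign_prodCongrRight]
  simp [hsign, pow_mul]

theorem cyclicShift_mul_blockColumn (X : Fin n → Matrix ι κ R) :
    cyclicShift R ι n * blockColumn X = blockColumn fun i => X (i - 1) :=
  cyclicShift_mul _

theorem blockDiagonal_mul_cyclicShift_apply (T : Fin n → Matrix ι ι R) (p q : ι × Fin n) :
    (blockDiagonal T * cyclicShift R ι n) p q = if p.2 - 1 = q.2 then T p.2 p.1 q.1 else 0 := by
  simp [mul_cyclicShift_apply, blockDiagonal_apply, sub_eq_iff_eq_add]

theorem det_one_sub_blockDiagonal_mul_cyclicShift_of_eq_zero {T : Fin n → Matrix ι ι R}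
    (hT : T 0 = 0) : (1 - blockDiagonal T * cyclicShift R ι n).det = 1 := by
  have hentry : ∀ p q : ι × Fin n, p.2 ≤ q.2 → (blockDiagonal T * cyclicShift R ι n) p q = 0 := by
    intro p q hpq
    rw [blockDiagonal_mul_cyclicShift_apply]
    split_ifs with hq
    · have hp : p.2 = 0 := by
        obtain ⟨k, rfl⟩ := Nat.exists_eq_succ_of_ne_zero (NeZero.ne n)
        by_contra hp
        exact (Fin.sub_one_lt_iff.2 (Fin.pos_iff_ne_zero.2 hp)).not_ge (hq ▸ hpq)
      rw [hp, hT, Matrix.zero_apply]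
    · rfl
  have htri : (1 - blockDiagonal T * cyclicShift R ι n).BlockTriangular
      fun p => OrderDual.toDual p.2 := by
    intro p q hpq
    have hlt : p.2 < q.2 := hpq
    rw [Matrix.sub_apply, hentry p q hlt.le, one_apply_ne, sub_zero]
    rintro rfl
    exact hlt.false
  rw [htri.det_fintype]
  refine Finset.prod_eq_one fun i _ => ?_
  suffices hone : (1 - blockDiagonal T * cyclicShift R ι n).toSquareBlock
      (fun p => OrderDual.toDual p.2) i = 1 by rw [hone, det_one]
  ext ⟨p, hp⟩ ⟨q, hq⟩
  have hpq : p.2 = q.2 := OrderDual.toDual.injective (hp.trans hq.symm)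
  simp [toSquareBlock_def, hentry p q hpq.le, one_apply]

theorem det_one_sub_blockDiagonal_mul_cyclicShift {T X : Fin n → Matrix ι ι R} (hX0 : X 0 = 1)
    (hX : ∀ i ≠ 0, X i = T i * X (i - 1)) :
    (1 - blockDiagonal T * cyclicShift R ι n).det = (1 - T 0 * X (-1)).det := by
  -- Cutting the cycle at block `0` leaves a unitriangular `N`, which differs from the cyclic
  -- operator by block rank one; the fundamental solution `X` solves `N X = E`.
  let E : Matrix (ι × Fin n) ι R := blockColumn (Pi.single 0 1)
  let N := 1 - blockDiagonal (Function.update T 0 0) * cyclicShift R ι n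
  have hN : N * blockColumn X = E := by
    rw [Matrix.sub_mul, Matrix.one_mul, Matrix.mul_assoc, cyclicShift_mul_blockColumn,
      blockDiagonal_mul_blockColumn]
    ext ⟨a, i⟩ c
    by_cases hi : i = 0
    · simp [E, blockColumn, hi, hX0]
    · simp [E, blockColumn, hi, ← hX i hi]
  have hT : blockDiagonal T = blockDiagonal (Function.update T 0 0) + E * T 0 * Eᵀ := by
    rw [blockColumn_single_mul_mul_transpose, ← blockDiagonal_add]
    congr 1
    ext i : 1
    by_cases hi : i = 0
    · subst hi; simp
    · simp [hi]
  have hfactor : 1 - blockDiagonal T * cyclicShift R ι n =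
      N * (1 - blockColumn X * (T 0 * (Eᵀ * cyclicShift R ι n))) := by
    rw [Matrix.mul_sub, ← Matrix.mul_assoc N, hN, Matrix.mul_one, hT, Matrix.add_mul, ← sub_sub]
    simp only [Matrix.mul_assoc, N]
  rw [hfactor, det_mul, det_one_sub_mul_comm (blockColumn X), Matrix.mul_assoc, Matrix.mul_assoc,
    cyclicShift_mul_blockColumn, transpose_blockColumn_single_mul_blockColumn, zero_sub,
    det_one_sub_blockDiagonal_mul_cyclicShift_of_eq_zero (Function.update_self ..), one_mul]

theorem det_one_sub_blockDiagonal_companion_mul_cyclicShift (F G : Fin n → Matrix ι ι R) :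
    (1 - blockDiagonal (fun i => fromBlocks 0 1 (F i) (G i)) * cyclicShift R (ι ⊕ ι) n).det =
      (1 - blockDiagonal G * cyclicShift R ι n -
        blockDiagonal F * cyclicShift R ι n * cyclicShift R ι n).det := by
  let e := (Equiv.sumProdDistrib ι ι (Fin n)).symm
  have hblocks :
      (1 - blockDiagonal (fun i => fromBlocks 0 1 (F i) (G i)) *
        cyclicShift R (ι ⊕ ι) n).submatrix e e =
      fromBlocks 1 (-cyclicShift R ι n) (-(blockDiagonal F * cyclicShift R ι n))
        (1 - blockDiagonal G * cyclicShift R ι n) := by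
    ext (⟨a, i⟩ | ⟨a, i⟩) (⟨b, j⟩ | ⟨b, j⟩) <;>
      simp [e, blockDiagonal_mul_cyclicShift_apply, cyclicShift_apply, one_apply, and_comm,
        ← ite_and]
  rw [← det_submatrix_equiv_self e, hblocks, det_fromBlocks_one₁₁, neg_mul_neg]

theorem prod_det_mul_det_one_sub_blockDiagonal_companion_mul_cyclicShift
    (D A L : Fin n → Matrix ι ι R) (hD : ∀ i, IsUnit (D i).det) :
    (∏ i, (D i).det) *
        (1 - blockDiagonal (fun i => fromBlocks 0 1 (-((D i)⁻¹ * L i)) ((D i)⁻¹ * A i)) *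
          cyclicShift R (ι ⊕ ι) n).det =
      (blockDiagonal D * (cyclicShift R ι n)ᵀ - blockDiagonal A +
        blockDiagonal L * cyclicShift R ι n).det * (cyclicShift R ι n).det := by
  let S := cyclicShift R ι n
  have hA : blockDiagonal D * blockDiagonal (fun i => (D i)⁻¹ * A i) = blockDiagonal A := by
    simp only [← blockDiagonal_mul, mul_nonsing_inv_cancel_left _ _ (hD _)]
  have hL : blockDiagonal D * blockDiagonal (fun i => -((D i)⁻¹ * L i)) = -blockDiagonal L := by
    simp only [← blockDiagonal_mul, Matrix.mul_neg, mul_nonsing_inv_cancel_left _ _ (hD _)]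
    exact blockDiagonal_neg L
  have hS : Sᵀ * S = 1 := transpose_cyclicShift_mul_cyclicShift
  rw [det_one_sub_blockDiagonal_companion_mul_cyclicShift, ← det_blockDiagonal, ← det_mul,
    ← det_mul]
  congr 1
  calc blockDiagonal D * (1 - blockDiagonal (fun i => (D i)⁻¹ * A i) * S -
          blockDiagonal (fun i => -((D i)⁻¹ * L i)) * S * S)
      = blockDiagonal D - blockDiagonal A * S + blockDiagonal L * S * S := by
        simp only [Matrix.mul_sub, ← Matrix.mul_assoc, hA, hL, Matrix.mul_one, Matrix.neg_mul,
          sub_neg_eq_add]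
    _ = (blockDiagonal D * Sᵀ - blockDiagonal A + blockDiagonal L * S) * S := by
        rw [Matrix.add_mul, Matrix.sub_mul, Matrix.mul_assoc _ Sᵀ, hS, Matrix.mul_one]

end CyclicShift

section Lagrangian

variable {m n : ℕ} [NeZero n] {A B : ℤ → Matrix (Fin m) (Fin m) ℝ}

theorem periodic_apply_fin_sub_one {α : Type*} {f : ℤ → α} (hf : Function.Periodic f n)
    (i : Fin n) : f ((i - 1 : Fin n) : ℕ) = f (i - 1) := by
  obtain ⟨k, rfl⟩ := Nat.exists_eq_succ_of_ne_zero (NeZero.ne n)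
  by_cases hi : i = 0
  · simpa [hi] using hf (-1)
  · rw [Fin.val_sub_one_of_ne_zero hi, Nat.cast_sub (Nat.one_le_iff_ne_zero.2 (by simpa))]
    simp

theorem isHermitian_hessian (hA : ∀ i, (A i)ᵀ = A i) (hB : Function.Periodic B n) :
    (hessian m n A B).IsHermitian := by
  have hcoupling : ∀ p q : Fin n × Fin m,
      (if q.1 = p.1 - 1 then -(B (((p.1 : ℕ) : ℤ) - 1) p.2 q.2) else 0) =
        if p.1 = q.1 + 1 then -(B ((q.1 : ℕ) : ℤ) p.2 q.2) else 0 := by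
    intro p q
    rw [← periodic_apply_fin_sub_one hB]
    by_cases hq : q.1 = p.1 - 1
    · simp [hq]
    · rw [if_neg hq, if_neg fun hp => hq (eq_sub_of_add_eq hp.symm)]
  have hdiag : ∀ p q : Fin n × Fin m,
      (if q.1 = p.1 then A ((p.1 : ℕ) : ℤ) p.2 q.2 else 0) =
        if p.1 = q.1 then A ((q.1 : ℕ) : ℤ) q.2 p.2 else 0 := by
    intro p q
    by_cases hpq : p.1 = q.1
    · rw [if_pos hpq, if_pos hpq.symm, hpq, ← transpose_apply (A _), hA]
    · rw [if_neg hpq, if_neg (Ne.symm hpq)]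
  ext p q
  simp only [conjTranspose_apply, star_trivial, hessian]
  rw [hdiag q p, hcoupling p q, hcoupling q p, add_right_comm]

theorem hessian_submatrix_swap (A B : ℤ → Matrix (Fin m) (Fin m) ℝ) :
    (hessian m n A B).submatrix Prod.swap Prod.swap =
      -(blockDiagonal (fun i : Fin n => (B i)ᵀ) * (cyclicShift ℝ (Fin m) n)ᵀ -
        blockDiagonal (fun i : Fin n => A i) +
        blockDiagonal (fun i : Fin n => B (i - 1)) * cyclicShift ℝ (Fin m) n) := by
  ext ⟨a, i⟩ ⟨b, j⟩
  simp only [submatrix_apply, Prod.swap_prod_mk, hessian, Matrix.neg_apply, Matrix.add_apply,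
    Matrix.sub_apply, blockDiagonal_mul_cyclicShift_apply, mul_transpose_cyclicShift_apply,
    blockDiagonal_apply, transpose_apply, eq_comm (a := j), ← eq_sub_iff_add_eq]
  split_ifs <;> ring

theorem monodromy_succ (A B : ℤ → Matrix (Fin m) (Fin m) ℝ) (n : ℕ) :
    monodromy m (n + 1) A B = transferMatrix m A B (n + 1) * monodromy m n A B := by
  simp [monodromy, List.range_succ]

theorem det_one_sub_blockDiagonal_transferMatrix_mul_cyclicShift
    (hA : Function.Periodic A n) (hB : Function.Periodic B n) :
    (1 - blockDiagonal (fun i : Fin n => transferMatrix m A B i) *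
      cyclicShift ℝ (Fin m ⊕ Fin m) n).det = (1 - monodromy m n A B).det := by
  obtain ⟨k, rfl⟩ := Nat.exists_eq_succ_of_ne_zero (NeZero.ne n)
  have hperiod : transferMatrix m A B (k + 1) = transferMatrix m A B 0 := by
    have hA0 : A (k + 1) = A 0 := by simpa using hA 0
    have hB0 : B (k + 1) = B 0 := by simpa using hB 0
    have hBk : B k = B (-1) := by simpa using hB (-1)
    simp [transferMatrix, hA0, hB0, hBk]
  have hstep (i : Fin (k + 1)) (hi : i ≠ 0) :
      monodromy m i A B = transferMatrix m A B i * monodromy m (i - 1 : Fin (k + 1)) A B := by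
    obtain ⟨j, rfl⟩ := Fin.exists_succ_eq.2 hi
    have hj : j.succ - 1 = j.castSucc := by simp [sub_eq_iff_eq_add]
    rw [hj, Fin.val_succ, Fin.val_castSucc, monodromy_succ, Nat.cast_succ]
  rw [det_one_sub_blockDiagonal_mul_cyclicShift (by simp [monodromy]) hstep, monodromy_succ,
    hperiod]
  simp

theorem det_hessian (hA : Function.Periodic A n) (hB : Function.Periodic B n)
    (hBinv : ∀ i, IsUnit (B i).det) :
    (hessian m n A B).det =
      (-1) ^ m * (∏ i : Fin n, (B i).det) * (monodromy m n A B - 1).det := by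
  have hmono : (1 - monodromy m n A B).det = (monodromy m n A B - 1).det := by
    rw [← neg_sub, det_neg]
    simp
  have hpow : (-1 : ℝ) ^ (m * n) = (-1) ^ m * (-1) ^ ((n - 1) * m) := by
    obtain ⟨k, rfl⟩ := Nat.exists_eq_succ_of_ne_zero (NeZero.ne n)
    simp only [Nat.succ_eq_add_one, Nat.add_sub_cancel]
    ring
  have hschur := prod_det_mul_det_one_sub_blockDiagonal_companion_mul_cyclicShift
    (fun i : Fin n => (B i)ᵀ) (fun i : Fin n => A i) (fun i : Fin n => B (i - 1))
    fun i => by simpa using hBinv i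
  change _ * (1 - blockDiagonal (fun i : Fin n => transferMatrix m A B i) * _).det = _ at hschur
  simp only [det_one_sub_blockDiagonal_transferMatrix_mul_cyclicShift hA hB, hmono, det_transpose,
    det_cyclicShift, Fintype.card_fin] at hschur
  rw [← det_submatrix_equiv_self (Equiv.prodComm _ _), Equiv.coe_prodComm, hessian_submatrix_swap,
    det_neg, Fintype.card_prod, Fintype.card_fin, Fintype.card_fin, hpow, mul_assoc, mul_assoc,
    hschur, mul_comm (det _)]

end Lagrangian

/-- **Instability criterion**: if the Hessian `H` is invertible and
`σ · (-1)^{m + ind H} < 0` with `σ = sign ∏ det B_i`, then the monodromy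
matrix has a real eigenvalue `ρ > 1`. -/
theorem instability_criterion (m n : ℕ) (hm : 0 < m) [NeZero n]
    (A B : ℤ → Matrix (Fin m) (Fin m) ℝ)
    (hAper : ∀ i, A (i + n) = A i) (hBper : ∀ i, B (i + n) = B i)
    (hAsym : ∀ i, (A i)ᵀ = A i) (hBinv : ∀ i, IsUnit (B i).det)
    (hH : IsUnit (hessian m n A B).det)
    (hcond : Real.sign (∏ i : Fin n, (B ((i : ℕ) : ℤ)).det) *
      (-1 : ℝ) ^ (m + matIndex (hessian m n A B)) < 0) :
    ∃ ρ : ℝ, 1 < ρ ∧ (monodromy m n A B - ρ • 1).det = 0 := by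
  have hHess : (hessian m n A B).IsHermitian := isHermitian_hessian hAsym hBper
  have hindex := neg_one_pow_matIndex_mul_det_pos hHess hH.ne_zero
  rw [det_hessian hAper hBper hBinv] at hindex
  have hneg := sign_mul_neg_iff.1 hcond
  have hpos : 0 < ((∏ i : Fin n, (B ((i : ℕ) : ℤ)).det) *
      (-1 : ℝ) ^ (m + matIndex (hessian m n A B))) * (monodromy m n A B - 1).det := by
    convert hindex using 1
    ring
  have hdet : (monodromy m n A B - (1 : ℝ) • 1).det < 0 := by
    rw [one_smul]
    exact neg_of_mul_pos_right hpos hneg.le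
  exact exists_det_sub_smul_one_eq_zero_of_det_sub_smul_one_neg (by simp) hdet
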